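/- arXiv:1606.09389 — 4 statements merged into one kernel-verified Lean document; each statement's English description precedes it below -/
import Mathlib

section
/- Let G be a finite graph and let d be a positive integer such that d divides the degree of every vertex of G but d does not divide the number of edges of G. Then for every positive integer k, G has no cyclic interval (d·k)-coloring. -/
open SimpleGraph

/-- The set of colors appearing on edges incident to `v` under the edge coloring `c`. -/
def colorsAt {V : Type*} (G : SimpleGraph V) (c : Sym2 V → ℕ) (v : V) : Set ℕ :=
  c '' (G.incidenceSet v)

/-- A set of natural numbers is an interval of consecutive integers. -/
def IsIntervalSet (S : Set ℕ) : Prop := ∃ a b : ℕ, S = Set.Icc a b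

/-- A proper edge coloring of `G` with colors `1, …, t`: every edge gets a color in
`{1, …, t}` and distinct edges sharing a vertex get distinct colors. -/
def IsProperEdgeColoring {V : Type*} (G : SimpleGraph V) (t : ℕ) (c : Sym2 V → ℕ) : Prop :=
  (∀ e ∈ G.edgeSet, c e ∈ Set.Icc 1 t) ∧
  ∀ e₁ ∈ G.edgeSet, ∀ e₂ ∈ G.edgeSet, e₁ ≠ e₂ → (∃ v, v ∈ e₁ ∧ v ∈ e₂) → c e₁ ≠ c e₂

/-- A cyclic interval `t`-coloring of `G`: a proper edge coloring with colors `1, …, t`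
such that at every vertex the set of incident colors, or its complement in `{1, …, t}`,
is an interval of consecutive integers. -/
def IsCyclicIntervalColoring {V : Type*} (G : SimpleGraph V) (t : ℕ) (c : Sym2 V → ℕ) : Prop :=
  IsProperEdgeColoring G t c ∧
  ∀ v : V, IsIntervalSet (colorsAt G c v) ∨ IsIntervalSet (Set.Icc 1 t \ colorsAt G c v)

lemma count_Ico (d r a m : ℕ) (hr : r < d) :
    ((Finset.Ico a (a + d * m)).filter (fun x => x % d = r)).card = m := by
  induction m with
  | zero => simp
  | succ m ih =>
    have hp : Function.Periodic (fun x => x % d = r) d := by intro x; simp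
    have h1 := Nat.filter_Ico_card_eq_of_periodic (a + d * m) d (fun x => x % d = r) hp
    have h2 : d.count (fun x => x % d = r) = 1 := by
      rw [Nat.count_eq_card_filter_range, Finset.card_eq_one]
      refine ⟨r, ?_⟩
      ext x
      simp only [Finset.mem_filter, Finset.mem_range, Finset.mem_singleton]
      constructor
      · rintro ⟨h, h'⟩
        rwa [Nat.mod_eq_of_lt h] at h'
      · rintro rfl
        exact ⟨hr, Nat.mod_eq_of_lt hr⟩
    rw [h2] at h1
    have h3 : Finset.Ico a (a + d * (m + 1)) =
        Finset.Ico a (a + d * m) ∪ Finset.Ico (a + d * m) (a + d * m + d) := by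
      rw [Finset.Ico_union_Ico_eq_Ico (by omega) (by omega), Nat.mul_succ, Nat.add_assoc]
    rw [h3, Finset.filter_union, Finset.card_union_of_disjoint, ih, h1]
    exact Finset.disjoint_filter_filter (Finset.Ico_disjoint_Ico_consecutive _ _ _)

lemma count_Icc (d r a b : ℕ) (hr : r < d) (h : d ∣ (Finset.Icc a b).card) :
    d * ((Finset.Icc a b).filter (fun x => x % d = r)).card = (Finset.Icc a b).card := by
  obtain ⟨m, hm⟩ := h
  have hI : Finset.Icc a b = Finset.Ico a (a + d * m) := by
    rw [Nat.card_Icc] at hm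
    ext x
    simp only [Finset.mem_Icc, Finset.mem_Ico]
    omega
  rw [hm, hI, count_Ico d r a m hr]

lemma count_cyc (d k r : ℕ) (S : Finset ℕ) (hr : r < d) (hS : S ⊆ Finset.Icc 1 (d * k))
    (h : d ∣ S.card)
    (hi : (∃ a b, S = Finset.Icc a b) ∨ ∃ a b, Finset.Icc 1 (d * k) \ S = Finset.Icc a b) :
    d * (S.filter (fun x => x % d = r)).card = S.card := by
  rcases hi with ⟨a, b, rfl⟩ | ⟨a, b, hab⟩
  · exact count_Icc d r a b hr h
  · have hc := Finset.card_sdiff_add_card_eq_card hS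
    have hT : d ∣ (Finset.Icc 1 (d * k)).card := by simp
    have h1 := count_Icc d r _ _ hr hT
    have h2 : d ∣ (Finset.Icc 1 (d * k) \ S).card := by
      rw [← hc] at hT
      exact (Nat.dvd_add_left h).1 hT
    rw [hab] at h2 hc
    have h3 := count_Icc d r _ _ hr h2
    have hf : ((Finset.Icc a b).filter (fun x => x % d = r)).card +
        (S.filter (fun x => x % d = r)).card
        = ((Finset.Icc 1 (d * k)).filter (fun x => x % d = r)).card := by
      rw [← hab, ← Finset.card_union_of_disjoint, ← Finset.filter_union,
        Finset.sdiff_union_of_subset hS]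
      exact Finset.disjoint_filter_filter Finset.sdiff_disjoint
    rw [← hf, Nat.mul_add] at h1
    omega

lemma double_count {V : Type*} [Fintype V] [DecidableEq V] (G : SimpleGraph V)
    [DecidableRel G.Adj] (p : Sym2 V → Prop) [DecidablePred p] :
    ∑ v, ((G.incidenceFinset v).filter p).card = 2 * (G.edgeFinset.filter p).card := by
  have h := Finset.sum_card_bipartiteAbove_eq_sum_card_bipartiteBelow
    (s := (Finset.univ : Finset V)) (t := G.edgeFinset.filter p) (fun v e => v ∈ e)
  have h1 : ∀ v, ((G.incidenceFinset v).filter p) =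
      Finset.bipartiteAbove (fun v e => v ∈ e) (G.edgeFinset.filter p) v := by
    intro v
    rw [G.incidenceFinset_eq_filter]
    ext e
    simp only [Finset.bipartiteAbove, Finset.mem_filter]
    tauto
  simp_rw [h1]
  rw [h, Finset.sum_const_nat (m := 2), mul_comm]
  intro e he
  rw [Finset.mem_filter, SimpleGraph.mem_edgeFinset] at he
  rw [← Sym2.card_toFinset_of_not_isDiag e (G.not_isDiag_of_mem_edgeSet he.1)]
  congr 1
  ext v
  simp [Finset.bipartiteBelow]

theorem stmt_14 {V : Type*} [Fintype V] [DecidableEq V] (G : SimpleGraph V)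
    [DecidableRel G.Adj] (d : ℕ) (hd : 0 < d)
    (hdvd : ∀ v : V, d ∣ G.degree v) (hnd : ¬ d ∣ G.edgeFinset.card) :
    ∀ k : ℕ, 0 < k → ¬ ∃ c : Sym2 V → ℕ, IsCyclicIntervalColoring G (d * k) c := by
  rintro k hk ⟨c, ⟨hc1, hc2⟩, hc3⟩
  apply hnd
  have key : ∀ v, d * ((G.incidenceFinset v).filter (fun e => c e % d = 0)).card
      = G.degree v := by
    intro v
    have hinj : Set.InjOn c (G.incidenceFinset v : Set (Sym2 V)) := by
      intro e he f hf hef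
      rw [SimpleGraph.coe_incidenceFinset] at he hf
      by_contra hne
      exact hc2 e he.1 f hf.1 hne ⟨v, he.2, hf.2⟩ hef
    have hcol : colorsAt G c v = (((G.incidenceFinset v).image c : Finset ℕ) : Set ℕ) := by
      simp [colorsAt]
    have hcard : ((G.incidenceFinset v).image c).card = G.degree v := by
      rw [Finset.card_image_of_injOn hinj, G.card_incidenceFinset_eq_degree]
    have := count_cyc d k 0 ((G.incidenceFinset v).image c) hd ?_ (hcard ▸ hdvd v) ?_
    · rw [hcard, Finset.filter_image, Finset.card_image_of_injOn] at this
      · exact this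
      · exact hinj.mono (by intro x hx; exact (Finset.mem_filter.1 hx).1)
    · intro x hx
      obtain ⟨e, he, rfl⟩ := Finset.mem_image.1 hx
      rw [SimpleGraph.mem_incidenceFinset] at he
      simpa using hc1 e he.1
    · refine (hc3 v).imp ?_ ?_
      · rintro ⟨a, b, h⟩
        refine ⟨a, b, ?_⟩
        rw [hcol] at h
        apply Finset.coe_injective
        simpa only [Finset.coe_sdiff, Finset.coe_Icc] using h
      · rintro ⟨a, b, h⟩
        refine ⟨a, b, ?_⟩
        rw [hcol] at h
        apply Finset.coe_injective
        simpa only [Finset.coe_sdiff, Finset.coe_Icc] using h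
  have h1 := double_count G (fun e => c e % d = 0)
  have h2 := G.sum_degrees_eq_twice_card_edges
  simp_rw [← key] at h2
  rw [← Finset.mul_sum, h1] at h2
  refine ⟨(G.edgeFinset.filter (fun e => c e % d = 0)).card, (Nat.eq_of_mul_eq_mul_left two_pos (by rw [← h2]; ring))⟩
end

section
/- Let G be a finite Eulerian graph (every vertex has even degree) whose number of edges is odd. Then G has no cyclic interval t-coloring for any even positive integer t. -/
open SimpleGraph

theorem alt_sum_Icc (a n : ℕ) : ∑ x ∈ Finset.Ico a (a + 2 * n), (-1 : ℤ) ^ x = 0 := by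
  induction n with
  | zero => simp
  | succ n ih =>
    rw [show a + 2 * (n + 1) = a + 2 * n + 1 + 1 by ring, Finset.sum_Ico_succ_top (by omega),
      Finset.sum_Ico_succ_top (by omega), ih]
    ring

theorem alt_sum_Icc_even (a b : ℕ) (h : Even (Finset.Icc a b).card) :
    ∑ x ∈ Finset.Icc a b, (-1 : ℤ) ^ x = 0 := by
  rw [Nat.card_Icc] at h
  obtain ⟨k, hk⟩ := h
  by_cases hab : a ≤ b + 1
  · have : Finset.Icc a b = Finset.Ico a (a + 2 * k) := by
      ext x; simp only [Finset.mem_Icc, Finset.mem_Ico]; omega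
    rw [this, alt_sum_Icc]
  · rw [Finset.Icc_eq_empty (by omega)]; simp

theorem alt_sum_vertex (S : Finset ℕ) (t : ℕ) (ht : Even t) (hS : S ⊆ Finset.Icc 1 t)
    (hc : Even S.card)
    (h : IsIntervalSet (S : Set ℕ) ∨ IsIntervalSet (Set.Icc 1 t \ (S : Set ℕ))) :
    ∑ x ∈ S, (-1 : ℤ) ^ x = 0 := by
  rcases h with ⟨a, b, h⟩ | ⟨a, b, h⟩
  · have h' : S = Finset.Icc a b := by
      apply Finset.coe_injective; simpa using h
    rw [h'] at hc ⊢
    exact alt_sum_Icc_even a b hc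
  · have h' : Finset.Icc 1 t \ S = Finset.Icc a b := by
      apply Finset.coe_injective; simpa using h
    have h1 := Finset.sum_sdiff hS (f := fun x => (-1 : ℤ) ^ x)
    have h2 := Finset.card_sdiff_add_card_eq_card hS
    rw [h'] at h1 h2
    rw [Nat.card_Icc 1 t, Nat.add_sub_cancel] at h2
    rw [alt_sum_Icc_even 1 t (by simpa using ht), alt_sum_Icc_even a b
      (by rw [← h2, Nat.even_add] at ht; exact ht.2 hc)] at h1
    simpa using h1

/-- a finite Eulerian graph with an odd number of edges has no cyclic
interval `t`-coloring for any even positive integer `t`. -/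
theorem stmt_15 {V : Type*} [Fintype V] [DecidableEq V] (G : SimpleGraph V)
    [DecidableRel G.Adj] (heul : ∀ v : V, Even (G.degree v))
    (hodd : Odd G.edgeFinset.card) :
    ∀ t : ℕ, 0 < t → Even t → ¬ ∃ c : Sym2 V → ℕ, IsCyclicIntervalColoring G t c := by
  rintro t - ht ⟨c, ⟨hr, hp⟩, hi⟩
  have hv : ∀ v : V, ∑ e ∈ G.incidenceFinset v, (-1 : ℤ) ^ c e = 0 := by
    intro v
    have hinj : Set.InjOn c (G.incidenceFinset v : Set (Sym2 V)) := by
      intro e₁ h₁ e₂ h₂ h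
      by_contra hne
      rw [Finset.mem_coe, mem_incidenceFinset] at h₁ h₂
      exact hp e₁ h₁.1 e₂ h₂.1 hne ⟨v, h₁.2, h₂.2⟩ h
    have hco : (((G.incidenceFinset v).image c : Finset ℕ) : Set ℕ) = colorsAt G c v := by
      simp [colorsAt]
    rw [← Finset.sum_image (f := fun x => (-1 : ℤ) ^ x) hinj]
    apply alt_sum_vertex _ t ht
    · intro x hx
      obtain ⟨e, he, rfl⟩ := Finset.mem_image.1 hx
      rw [mem_incidenceFinset] at he
      simpa using hr e he.1
    · rw [Finset.card_image_of_injOn hinj, card_incidenceFinset_eq_degree]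
      exact heul v
    · rw [hco]; exact hi v
  have hd : ∑ v : V, ∑ e ∈ G.incidenceFinset v, (-1 : ℤ) ^ c e
      = ∑ e ∈ G.edgeFinset, ∑ _v ∈ e.toFinset, (-1 : ℤ) ^ c e := by
    apply Finset.sum_comm'
    intro v e
    simp [mem_incidenceFinset, incidenceSet, and_comm]
  have hd2 : ∑ e ∈ G.edgeFinset, ∑ _v ∈ e.toFinset, (-1 : ℤ) ^ c e
      = ∑ e ∈ G.edgeFinset, 2 * (-1 : ℤ) ^ c e := by
    apply Finset.sum_congr rfl
    intro e he
    rw [Finset.sum_const, Sym2.card_toFinset_of_not_isDiag e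
      (G.not_isDiag_of_mem_edgeSet (mem_edgeFinset.1 he))]
    simp
  rw [Finset.sum_eq_zero (fun v _ => hv v)] at hd
  rw [← hd, ← Finset.mul_sum] at hd2
  have h0 : ∑ e ∈ G.edgeFinset, (-1 : ℤ) ^ c e = 0 := by omega
  have h1 := congrArg (Int.cast : ℤ → ZMod 2) h0
  have hneg : (-1 : ZMod 2) = 1 := by decide
  push_cast at h1
  simp only [hneg, one_pow, Finset.sum_const, nsmul_eq_mul, mul_one] at h1
  rw [ZMod.natCast_eq_zero_iff_even] at h1
  exact (Nat.not_even_iff_odd.2 hodd) h1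
end

section
/- Let r ≥ 3 and n₂, …, n_r be positive integers such that r is odd, each n_i (2 ≤ i ≤ r) is odd, and the number of edges of the complete multipartite graph K_{1,n₂,…,n_r} is odd. Then the least t for which K_{1,n₂,…,n_r} has a cyclic interval t-coloring equals 1 + (n₂ + ⋯ + n_r). -/
open SimpleGraph

lemma ivl_aux (N a A m : ℕ) (ha : a < N) (hm : 0 < m) (hA : A + m ≤ N) (M : Set ℕ)
    (hM : ∀ x, x ∈ M ↔ ∃ w < N, (w < A ∨ A + m ≤ w) ∧ x = (a + w) % N + 1) :
    IsIntervalSet M ∨ IsIntervalSet (Set.Icc 1 N \ M) := by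
  have hmod : ∀ w < N, (a + w) % N = if a + w < N then a + w else a + w - N := by
    intro w hw
    split_ifs with h
    · exact Nat.mod_eq_of_lt h
    · rw [Nat.mod_eq_sub_mod (by omega), Nat.mod_eq_of_lt (by omega)]
  have hM' : ∀ x, x ∈ M ↔ 1 ≤ x ∧ x ≤ N ∧
      ((a < x ∧ (x - 1 - a < A ∨ A + m ≤ x - 1 - a)) ∨
       (x ≤ a ∧ (x - 1 + N - a < A ∨ A + m ≤ x - 1 + N - a))) := by
    intro x
    rw [hM]
    constructor
    · rintro ⟨w, hw, h, rfl⟩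
      rw [hmod w hw]
      split_ifs <;> omega
    · rintro ⟨h1, h2, h | h⟩
      · refine ⟨x - 1 - a, by omega, by omega, ?_⟩
        rw [hmod _ (by omega), if_pos (by omega)]; omega
      · refine ⟨x - 1 + N - a, by omega, by omega, ?_⟩
        rw [hmod _ (by omega), if_neg (by omega)]; omega
  by_cases h1 : a + A + m ≤ N
  · right
    refine ⟨a + A + 1, a + A + m, ?_⟩
    ext x
    simp only [Set.mem_diff, Set.mem_Icc, hM']
    omega
  · by_cases h2 : N ≤ a + A
    · right
      refine ⟨a + A + 1 - N, a + A + m - N, ?_⟩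
      ext x
      simp only [Set.mem_diff, Set.mem_Icc, hM']
      omega
    · left
      refine ⟨a + A + m - N + 1, a + A, ?_⟩
      ext x
      simp only [Set.mem_Icc, hM']
      omega

lemma ico_odd (a k : ℕ) : ((Finset.Ico a (a + 2 * k)).filter Odd).card = k := by
  induction k with
  | zero => simp
  | succ k ih =>
    rw [show a + 2 * (k + 1) = a + 2 * k + 1 + 1 by ring,
      ← Finset.insert_Ico_right_eq_Ico_add_one (by omega),
      ← Finset.insert_Ico_right_eq_Ico_add_one (by omega), Finset.filter_insert,
      Finset.filter_insert]
    rcases Nat.even_or_odd (a + 2 * k) with h | h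
    · rw [if_pos h.add_one, if_neg (by simpa using h), Finset.card_insert_of_notMem (by simp), ih]
    · rw [if_neg (by simpa using h.add_one), if_pos h,
        Finset.card_insert_of_notMem (by simp), ih]

lemma icc_odd (T : Finset ℕ) (h : IsIntervalSet (T : Set ℕ)) (he : Even T.card) :
    2 * (T.filter Odd).card = T.card := by
  obtain ⟨a, b, hab⟩ := h
  have hT : T = Finset.Icc a b := by
    apply Finset.coe_injective; rw [hab]; simp
  obtain ⟨k, hk⟩ := he
  have hk' : b + 1 - a = 2 * k := by rw [hT] at hk; simp at hk; omega
  have : T = Finset.Ico a (a + 2 * k) := by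
    rw [hT]; ext x; simp; omega
  rw [this, ico_odd]; simp

lemma cyc_odd (t : ℕ) (ht : Even t) (T : Finset ℕ) (hT : T ⊆ Finset.Icc 1 t)
    (h : IsIntervalSet (T : Set ℕ) ∨ IsIntervalSet (Set.Icc 1 t \ (T : Set ℕ)))
    (he : Even T.card) : 2 * (T.filter Odd).card = T.card := by
  rcases h with h | h
  · exact icc_odd T h he
  · have hc : (Finset.Icc 1 t \ T).card + T.card = t := by
      rw [Finset.card_sdiff_add_card_eq_card hT]; simp
    have h1 := icc_odd (Finset.Icc 1 t \ T) (by simpa using h) (by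
      rw [← hc] at ht
      exact (Nat.even_add.1 ht).2 he)
    have h2 := icc_odd (Finset.Icc 1 t) ⟨1, t, by simp⟩ (by simpa using ht)
    have h3 : ((Finset.Icc 1 t \ T).filter Odd).card + (T.filter Odd).card
        = ((Finset.Icc 1 t).filter Odd).card := by
      rw [← Finset.card_union_of_disjoint]
      · rw [← Finset.filter_union, Finset.sdiff_union_of_subset hT]
      · exact Finset.disjoint_filter_filter Finset.sdiff_disjoint
    simp only [Nat.card_Icc] at h2
    omega

lemma double_count_s16 {V : Type*} [Fintype V] [DecidableEq V] (E : Finset (Sym2 V))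
    (hE : ∀ e ∈ E, ¬ e.IsDiag) : ∑ v : V, (E.filter (fun e => v ∈ e)).card = 2 * E.card := by
  have : ∀ e ∈ E, (Finset.univ.filter (fun v : V => v ∈ e)).card = 2 := by
    intro e he
    rw [← Sym2.card_toFinset_of_not_isDiag e (hE e he)]
    congr 1
    ext v; simp
  have h := Finset.sum_card_bipartiteAbove_eq_sum_card_bipartiteBelow (s := Finset.univ) (t := E)
    (fun (v : V) (e : Sym2 V) => v ∈ e)
  unfold Finset.bipartiteBelow Finset.bipartiteAbove at h
  rw [h, Finset.sum_congr rfl this]; simp [mul_comm]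

lemma even_edges {V : Type*} [Fintype V] [DecidableEq V] (E : Finset (Sym2 V))
    (hE : ∀ e ∈ E, ¬ e.IsDiag) (c : Sym2 V → ℕ) (t : ℕ) (ht : Even t)
    (hc : ∀ e ∈ E, c e ∈ Set.Icc 1 t)
    (hinj : ∀ v : V, Set.InjOn c (E.filter (fun e => v ∈ e)))
    (hcyc : ∀ v : V, IsIntervalSet (c '' (E.filter (fun e => v ∈ e))) ∨
      IsIntervalSet (Set.Icc 1 t \ (c '' (E.filter (fun e => v ∈ e)))))
    (hdeg : ∀ v : V, Even (E.filter (fun e => v ∈ e)).card) : Even E.card := by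
  have key : ∀ v : V, 2 * ((E.filter (fun e => Odd (c e))).filter (fun e => v ∈ e)).card
      = (E.filter (fun e => v ∈ e)).card := by
    intro v
    have h1 : ((E.filter (fun e => v ∈ e)).image c).card = (E.filter (fun e => v ∈ e)).card :=
      Finset.card_image_of_injOn (hinj v)
    have h2 := cyc_odd t ht ((E.filter (fun e => v ∈ e)).image c) (by
      intro x hx
      simp only [Finset.mem_image, Finset.mem_filter] at hx
      obtain ⟨e, he, rfl⟩ := hx
      simpa using hc e he.1) (by rw [Finset.coe_image]; exact hcyc v) (by rw [h1]; exact hdeg v)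
    rw [h1, Finset.filter_image, Finset.card_image_of_injOn
      ((hinj v).mono (by intro x hx; simp at hx ⊢; exact hx.1))] at h2
    rw [← h2, Finset.filter_comm]
  have a := double_count_s16 E hE
  have b := double_count_s16 (E.filter (fun e => Odd (c e)))
    (fun e he => hE e (Finset.mem_filter.1 he).1)
  have : 2 * E.card = 4 * (E.filter (fun e => Odd (c e))).card := by
    rw [← a, ← Finset.sum_congr rfl (fun v _ => key v), ← Finset.mul_sum, b]; ring
  exact ⟨(E.filter (fun e => Odd (c e))).card, by omega⟩

lemma deg_add {r : ℕ} (n : Fin r → ℕ) (v : Σ i : Fin r, Fin (n i)) :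
    ((SimpleGraph.completeMultipartiteGraph (fun i : Fin r => Fin (n i))).edgeFinset.filter
      (fun e => v ∈ e)).card + n v.1 = ∑ i, n i := by
  classical
  rw [← SimpleGraph.incidenceFinset_eq_filter, SimpleGraph.card_incidenceFinset_eq_degree,
    ← SimpleGraph.card_neighborFinset_eq_degree]
  have h1 : (Finset.univ.filter (fun u : Σ i : Fin r, Fin (n i) => u.1 = v.1)).card = n v.1 := by
    have : Finset.univ.filter (fun u : Σ i : Fin r, Fin (n i) => u.1 = v.1)
        = Finset.univ.map ⟨fun k : Fin (n v.1) => (⟨v.1, k⟩ : Σ i : Fin r, Fin (n i)),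
          fun a b h => by simpa using h⟩ := by
      ext ⟨i, k⟩
      simp only [Finset.mem_filter, Finset.mem_univ, true_and, Finset.mem_map,
        Function.Embedding.coeFn_mk]
      constructor
      · rintro rfl; exact ⟨k, rfl⟩
      · rintro ⟨a, ha⟩; exact (congrArg Sigma.fst ha).symm
    rw [this]; simp
  have h2 : (SimpleGraph.completeMultipartiteGraph
      (fun i : Fin r => Fin (n i))).neighborFinset v
      = Finset.univ.filter (fun u : Σ i : Fin r, Fin (n i) => ¬ u.1 = v.1) := by
    ext u; simp [eq_comm]
  have h3 := Finset.card_filter_add_card_filter_not (s := Finset.univ)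
    (fun u : Σ i : Fin r, Fin (n i) => u.1 = v.1)
  have h4 : (Finset.univ : Finset (Σ i : Fin r, Fin (n i))).card = ∑ i, n i := by simp
  rw [h2]
  omega

lemma upper {r : ℕ} (n : Fin r → ℕ) (hpos : ∀ i, 0 < n i) :
    ∃ c : Sym2 (Σ i : Fin r, Fin (n i)) → ℕ,
      IsCyclicIntervalColoring
        (SimpleGraph.completeMultipartiteGraph (fun i : Fin r => Fin (n i))) (∑ i, n i) c := by
  set N := ∑ i, n i with hN
  let f : (Σ i : Fin r, Fin (n i)) ≃ Fin N := finSigmaFinEquiv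
  let A : Fin r → ℕ := fun i => ∑ j : Fin i.val, n (Fin.castLE i.2.le j)
  have hf : ∀ u, (f u : ℕ) = A u.1 + u.2 := fun u => finSigmaFinEquiv_apply u
  have hAN : ∀ i, A i + n i ≤ N := by
    intro i
    have := (f ⟨i, ⟨n i - 1, by have := hpos i; omega⟩⟩).2
    rw [hf] at this
    have := hpos i
    simp only at *
    omega
  have hpart : ∀ u i, u.1 = i ↔ (A i ≤ (f u : ℕ) ∧ (f u : ℕ) < A i + n i) := by
    intro u i
    constructor
    · rintro rfl
      rw [hf]; have := u.2.2; omega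
    · rintro ⟨h1, h2⟩
      have : u = ⟨i, ⟨f u - A i, by omega⟩⟩ := by
        apply f.injective
        apply Fin.ext
        rw [hf ⟨i, _⟩]
        simp only
        omega
      exact congrArg Sigma.fst this
  let c : Sym2 (Σ i : Fin r, Fin (n i)) → ℕ :=
    Sym2.lift ⟨fun u v => ((f u : ℕ) + f v) % N + 1, fun u v => by
      simp only [add_comm (f u : ℕ)]⟩
  have hcm : ∀ u v, c s(u, v) = ((f u : ℕ) + f v) % N + 1 := fun u v => rfl
  refine ⟨c, ⟨?_, ?_⟩, ?_⟩
  · intro e he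
    induction e using Sym2.ind with
    | _ u v =>
      rw [hcm]
      have := Nat.mod_lt ((f u : ℕ) + f v) (Nat.lt_of_le_of_lt (Nat.zero_le _) (f u).2)
      simp only [Set.mem_Icc]; omega
  · rintro e₁ - e₂ - hne ⟨v, hv1, hv2⟩ heq
    obtain ⟨a, rfl⟩ := Sym2.mem_iff_exists.1 hv1
    obtain ⟨b, rfl⟩ := Sym2.mem_iff_exists.1 hv2
    rw [hcm, hcm] at heq
    have h1 : ((f v : ℕ) + f a) ≡ ((f v : ℕ) + f b) [MOD N] := by
      unfold Nat.ModEq; omega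
    have h2 := Nat.ModEq.add_left_cancel' _ h1
    have h3 := Nat.ModEq.eq_of_lt_of_lt h2 (f a).2 (f b).2
    exact hne (by rw [f.injective (Fin.ext h3)])
  · intro v
    refine ivl_aux N (f v) (A v.1) (n v.1) (f v).2 (hpos _) (hAN _) _ ?_
    intro x
    unfold colorsAt
    constructor
    · rintro ⟨e, ⟨he, hv⟩, rfl⟩
      obtain ⟨u, rfl⟩ := Sym2.mem_iff_exists.1 hv
      refine ⟨f u, (f u).2, ?_, hcm _ _⟩
      have : v.1 ≠ u.1 := by simpa using he
      have h2 := hpart u v.1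
      by_contra hcon
      exact this (h2.2 (by omega)).symm
    · rintro ⟨w, hw, h, rfl⟩
      refine ⟨s(v, f.symm ⟨w, hw⟩), ⟨?_, by simp⟩, by rw [hcm]; simp⟩
      have h2 := hpart (f.symm ⟨w, hw⟩) v.1
      simp only [Equiv.apply_symm_apply] at h2
      rw [SimpleGraph.mem_edgeSet, SimpleGraph.completeMultipartiteGraph]
      simp only [SimpleGraph.comap_adj, SimpleGraph.top_adj]
      intro h3
      have := h2.1 h3.symm
      omega

/-- if `r ≥ 3` is odd, `n₂, …, n_r` are odd positive integers, and the
complete multipartite graph `K_{1,n₂,…,n_r}` has an odd number of edges, then the least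
`t` for which it has a cyclic interval `t`-coloring equals `1 + (n₂ + ⋯ + n_r)`. -/
theorem stmt_16 (r : ℕ) (hr : 3 ≤ r) (hrodd : Odd r) (n : Fin r → ℕ)
    (h1 : n ⟨0, by omega⟩ = 1) (hpos : ∀ i, 0 < n i)
    (hodd : ∀ i : Fin r, i.val ≠ 0 → Odd (n i))
    (hE : Odd (SimpleGraph.completeMultipartiteGraph
        (fun i : Fin r => Fin (n i))).edgeFinset.card) :
    IsLeast {t : ℕ | ∃ c : Sym2 (Σ i : Fin r, Fin (n i)) → ℕ,
        IsCyclicIntervalColoring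
          (SimpleGraph.completeMultipartiteGraph (fun i : Fin r => Fin (n i))) t c}
      (1 + ∑ i ∈ Finset.univ.filter (fun i : Fin r => i.val ≠ 0), n i) := by
  classical
  have hN : 1 + ∑ i ∈ Finset.univ.filter (fun i : Fin r => i.val ≠ 0), n i = ∑ i, n i := by
    rw [← Finset.sum_filter_add_sum_filter_not Finset.univ (fun i : Fin r => i.val ≠ 0), add_comm]
    congr 1
    have : Finset.univ.filter (fun i : Fin r => ¬ i.val ≠ 0) = {⟨0, by omega⟩} := by
      ext i; simp [Fin.ext_iff]
    rw [this, Finset.sum_singleton, h1]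
  have hodd' : ∀ i, Odd (n i) := by
    intro i
    by_cases h : i.val = 0
    · have : i = ⟨0, by omega⟩ := Fin.ext h
      rw [this, h1]; exact odd_one
    · exact hodd i h
  have hNodd : Odd (∑ i, n i) := by
    rw [Finset.odd_sum_iff_odd_card_odd, Finset.filter_true_of_mem (fun i _ => hodd' i)]
    simpa using hrodd
  rw [hN]
  refine ⟨upper n hpos, ?_⟩
  rintro t ⟨c, ⟨hc, hp⟩, hcyc⟩
  by_contra hlt
  push Not at hlt
  set G := SimpleGraph.completeMultipartiteGraph (fun i : Fin r => Fin (n i)) with hG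
  have hinj : ∀ v, Set.InjOn c (G.edgeFinset.filter (fun e => v ∈ e)) := by
    intro v e₁ he₁ e₂ he₂ heq
    simp only [Finset.coe_filter, SimpleGraph.mem_edgeFinset, Set.mem_setOf_eq] at he₁ he₂
    by_contra hne
    exact hp e₁ he₁.1 e₂ he₂.1 hne ⟨v, he₁.2, he₂.2⟩ heq
  have hinc : ∀ v, (G.edgeFinset.filter (fun e => v ∈ e) : Set _) = G.incidenceSet v := by
    intro v; ext e; simp [SimpleGraph.incidenceSet]
  have ht : t + 1 = ∑ i, n i := by
    let v : Σ i : Fin r, Fin (n i) := ⟨⟨0, by omega⟩, ⟨0, hpos _⟩⟩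
    have h := deg_add n v
    have h' : n v.1 = 1 := h1
    have hle : (G.edgeFinset.filter (fun e => v ∈ e)).card ≤ (Finset.Icc 1 t).card := by
      refine Finset.card_le_card_of_injOn c ?_ (hinj v)
      intro e he
      simp only [Finset.coe_filter, SimpleGraph.mem_edgeFinset, Set.mem_setOf_eq] at he
      simpa using hc e he.1
    rw [Nat.card_Icc] at hle
    rw [h'] at h
    have h5 : (G.edgeFinset.filter (fun e => v ∈ e)).card + 1 = ∑ i, n i := by
      rw [← h]
    omega
  have hteven : Even t := by
    rw [← ht] at hNodd
    simpa [Nat.odd_add_one] using hNodd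
  have := even_edges G.edgeFinset
    (fun e he => G.not_isDiag_of_mem_edgeSet (by simpa using he)) c t hteven
    (fun e he => hc e (by simpa using he)) hinj
    (fun v => by rw [hinc v]; exact hcyc v)
    (fun v => by
      have h := deg_add n v
      rw [← h] at hNodd
      by_contra hcon
      rw [Nat.not_even_iff_odd] at hcon
      exact (Nat.not_odd_iff_even.2 (hcon.add_odd (hodd' v.1))) hNodd)
  rw [← Nat.not_odd_iff_even] at this
  exact this hE
end

section
/- The friendship graph F₃, consisting of three triangles that pairwise share exactly one common vertex v (so F₃ has 7 vertices, 9 edges, v has degree 6 and all other vertices have degree 2), has a cyclic interval 7-coloring. -/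
open SimpleGraph

/-- The friendship graph `F₃`: three triangles `{0,1,2}`, `{0,3,4}`, `{0,5,6}` pairwise
sharing exactly the common vertex `0`. -/
def friendshipF3 : SimpleGraph (Fin 7) :=
  SimpleGraph.fromEdgeSet
    {s(0, 1), s(0, 2), s(1, 2), s(0, 3), s(0, 4), s(3, 4), s(0, 5), s(0, 6), s(5, 6)}

/-- The edges of `F₃` as a finset. -/
def f3Edges : Finset (Sym2 (Fin 7)) :=
  {s(0, 1), s(0, 2), s(1, 2), s(0, 3), s(0, 4), s(3, 4), s(0, 5), s(0, 6), s(5, 6)}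

/-- The coloring; it uses all of the colors `1, …, 7`. -/
def f3Color (e : Sym2 (Fin 7)) : ℕ :=
  if e = s(0, 1) then 1 else if e = s(0, 2) then 3 else if e = s(1, 2) then 2 else
  if e = s(0, 3) then 2 else if e = s(0, 4) then 4 else if e = s(3, 4) then 3 else
  if e = s(0, 5) then 5 else if e = s(0, 6) then 7 else 6

theorem f3_edgeSet : friendshipF3.edgeSet = (f3Edges : Set (Sym2 (Fin 7))) := by
  have hd : ∀ e ∈ f3Edges, ¬ e.IsDiag := by decide
  have hs : friendshipF3 = SimpleGraph.fromEdgeSet (f3Edges : Set (Sym2 (Fin 7))) := by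
    simp [friendshipF3, f3Edges]
  rw [hs, SimpleGraph.edgeSet_fromEdgeSet]
  ext e
  simp only [Set.mem_diff, Finset.mem_coe]
  exact ⟨fun h => h.1, fun h => ⟨h, hd e h⟩⟩

theorem f3_colorsAt (v : Fin 7) : colorsAt friendshipF3 f3Color v =
    (((f3Edges.filter (fun e => v ∈ e)).image f3Color : Finset ℕ) : Set ℕ) := by
  simp only [colorsAt, SimpleGraph.incidenceSet, f3_edgeSet, Finset.coe_image, Finset.coe_filter]
  rfl

theorem f3_interval {v : Fin 7} (a b : ℕ)
    (h : (f3Edges.filter (fun e => v ∈ e)).image f3Color = Finset.Icc a b) :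
    IsIntervalSet (colorsAt friendshipF3 f3Color v) :=
  ⟨a, b, by rw [f3_colorsAt, h, Finset.coe_Icc]⟩

/-- the friendship graph `F₃` has a cyclic interval `7`-coloring. -/
theorem stmt_18 :
    ∃ c : Sym2 (Fin 7) → ℕ, IsCyclicIntervalColoring friendshipF3 7 c := by
  refine ⟨f3Color, ⟨?_, ?_⟩, ?_⟩
  · rw [f3_edgeSet]
    have h : ∀ e ∈ f3Edges, 1 ≤ f3Color e ∧ f3Color e ≤ 7 := by decide
    exact h
  · rw [f3_edgeSet]
    have h : ∀ e₁ ∈ f3Edges, ∀ e₂ ∈ f3Edges, e₁ ≠ e₂ → (∃ v, v ∈ e₁ ∧ v ∈ e₂) →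
        f3Color e₁ ≠ f3Color e₂ := by decide +kernel
    exact h
  · intro v
    fin_cases v
    · right
      refine ⟨6, 6, ?_⟩
      rw [f3_colorsAt, ← Finset.coe_Icc, ← Finset.coe_Icc, ← Finset.coe_sdiff]
      exact congrArg _ (by decide)
    · exact Or.inl (f3_interval 1 2 (by decide))
    · exact Or.inl (f3_interval 2 3 (by decide))
    · exact Or.inl (f3_interval 2 3 (by decide))
    · exact Or.inl (f3_interval 3 4 (by decide))
    · exact Or.inl (f3_interval 5 6 (by decide))
    · exact Or.inl (f3_interval 6 7 (by decide))
end
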